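/- (Theorem 1, Lipschitz-free mirror descent, weak ergodic convergence) Let Q ⊆ E be a compact convex set, ψ a differentiable σ-strongly convex prox-function on Q (σ > 0), f : Q → ℝ a convex continuous function with minimizer x* over Q, and suppose there is R > 0 with V_ψ(x*, x) ≤ R for all x ∈ Q. Fix a ∈ [0, 1] and m ≥ −1. Let x^1 ∈ Q and, for k = 1, …, N, set ∇f(x^k) ∈ ∂f(x^k), G_k = max_{j=1,…,k} { ‖∇f(x^j)‖_* · j^{(1−a)/2} }, γ_k = √(2σR)/(G_k k^{a/2}), and x^{k+1} = argmin_{x ∈ Q} { ⟨∇f(x^k), x⟩ + (1/γ_k) V_ψ(x, x^k) }. Define weights ω_k^{(m)} = γ_k^{−m} if −1 ≤ m ≤ 0 and ω_k^{(m)} = k^{m/2} if m > 0, and let x̂ = (∑_{k=1}^N ω_k^{(m)} x^k) / (∑_{k=1}^N ω_k^{(m)}). Then f(x̂) − f(x*) ≤ √(R/(2σ)) · ( N^{(m+1)/2} + ∑_{k=1}^N k^{(m−1)/2} ) / ( ∑_{k=1}^N k^{m/2} ) · max_{k=1,…,N} ‖∇f(x^k)‖_*. -/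

import Mathlib

/-- The Bregman divergence `V_ψ(x, y) = ψ(x) − ψ(y) − ⟨∇ψ(y), x − y⟩` associated with a
differentiable function `ψ` with gradient `ψ'`. -/
noncomputable def bregman {E : Type*} [NormedAddCommGroup E] [NormedSpace ℝ E]
    (ψ : E → ℝ) (ψ' : E → E →L[ℝ] ℝ) (x y : E) : ℝ :=
  ψ x - ψ y - ψ' y (x - y)

/-- `g` is a subgradient of `f` at `x` relative to `Q`. -/
def IsSubgradientAt {E : Type*} [NormedAddCommGroup E] [NormedSpace ℝ E]
    (f : E → ℝ) (Q : Set E) (g : E →L[ℝ] ℝ) (x : E) : Prop :=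
  ∀ y ∈ Q, f x + g (y - x) ≤ f y

open Finset

section Bregman

variable {E : Type*} [NormedAddCommGroup E] [NormedSpace ℝ E]

/-- The Bregman divergence of a `σ`-strongly convex function dominates `σ / 2 * ‖x - y‖ ^ 2`. -/
theorem StrongConvexOn.le_bregman {Q : Set E} {ψ : E → ℝ} {ψ' : E → E →L[ℝ] ℝ} {σ : ℝ}
    (hψ : StrongConvexOn Q σ ψ) {x y : E} (hx : x ∈ Q) (hy : y ∈ Q)
    (hd : HasFDerivWithinAt ψ (ψ' y) Q y) :
    σ / 2 * ‖x - y‖ ^ 2 ≤ bregman ψ ψ' x y := by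
  have hmem : ∀ t ∈ Set.Icc (0 : ℝ) 1, y + t • (x - y) ∈ Q := fun t ht =>
    hψ.1.add_smul_sub_mem hy hx ht
  have hline : HasDerivWithinAt (fun t : ℝ => y + t • (x - y)) (x - y) (Set.Icc 0 1) 0 := by
    simpa using (((hasDerivAt_id (0 : ℝ)).smul_const (x - y)).const_add y).hasDerivWithinAt
  have hcomp : HasDerivWithinAt (fun t : ℝ => ψ (y + t • (x - y))) (ψ' y (x - y))
      (Set.Icc 0 1) 0 := by
    have hd' : HasFDerivWithinAt ψ (ψ' y) Q (y + (0 : ℝ) • (x - y)) := by simpa using hd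
    exact hd'.comp_hasDerivWithinAt (0 : ℝ) hline hmem
  have hgap : HasDerivWithinAt
      (fun t : ℝ => t * (ψ x - ψ y) - t * (1 - t) * (σ / 2 * ‖x - y‖ ^ 2)
        - ψ (y + t • (x - y)))
      ((ψ x - ψ y) - σ / 2 * ‖x - y‖ ^ 2 - ψ' y (x - y)) (Set.Icc 0 1) 0 := by
    have hid := hasDerivAt_id (0 : ℝ)
    have h1 := (hid.mul_const (ψ x - ψ y)).sub
      ((hid.mul (hid.const_sub 1)).mul_const (σ / 2 * ‖x - y‖ ^ 2))
    have h2 := h1.hasDerivWithinAt.sub hcomp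
    refine h2.congr_deriv ?_
    simp
  have hmin : IsLocalMinOn (fun t : ℝ => t * (ψ x - ψ y)
      - t * (1 - t) * (σ / 2 * ‖x - y‖ ^ 2) - ψ (y + t • (x - y))) (Set.Icc 0 1) 0 := by
    refine IsMinOn.localize fun t ht => ?_
    have h := hψ.2 hx hy ht.1 (sub_nonneg.2 ht.2) (by ring)
    have hpt : t • x + (1 - t) • y = y + t • (x - y) := by module
    simp only [hpt, smul_eq_mul] at h
    simp only [Set.mem_ofPred_eq, zero_mul, zero_smul, add_zero]
    linarith
  have hcone : (1 : ℝ) ∈ posTangentConeAt (Set.Icc (0 : ℝ) 1) 0 :=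
    mem_posTangentConeAt_of_segment_subset (by simp [segment_eq_Icc])
  have h := hmin.hasFDerivWithinAt_nonneg hgap.hasFDerivWithinAt hcone
  simp only [ContinuousLinearMap.toSpanSingleton_apply, one_smul] at h
  unfold bregman
  linarith

theorem bregman_nonneg {Q : Set E} {ψ : E → ℝ} {ψ' : E → E →L[ℝ] ℝ} {σ : ℝ} (hσ : 0 ≤ σ)
    (hψ : StrongConvexOn Q σ ψ) {x y : E} (hx : x ∈ Q) (hy : y ∈ Q)
    (hd : HasFDerivWithinAt ψ (ψ' y) Q y) : 0 ≤ bregman ψ ψ' x y :=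
  (by positivity : 0 ≤ σ / 2 * ‖x - y‖ ^ 2).trans (hψ.le_bregman hx hy hd)

/-- Three-point inequality for the minimizer `p` of a Bregman proximal step from `x`. -/
theorem IsMinOn.bregman_prox_le {Q : Set E} {ψ : E → ℝ} {ψ' : E → E →L[ℝ] ℝ} {c : ℝ}
    (hQ : Convex ℝ Q) {g : E →L[ℝ] ℝ} {x p u : E} (hp : p ∈ Q) (hu : u ∈ Q)
    (hd : HasFDerivWithinAt ψ (ψ' p) Q p)
    (hmin : IsMinOn (fun z => g z + c * bregman ψ ψ' z x) Q p) :
    g (p - u) ≤ c * (bregman ψ ψ' u x - bregman ψ ψ' u p - bregman ψ ψ' p x) := by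
  have hderiv : HasFDerivWithinAt (fun z => g z + c * bregman ψ ψ' z x)
      (g + c • (ψ' p - ψ' x)) Q p := by
    have hlin : HasFDerivWithinAt (fun z => ψ' x (z - x)) (ψ' x) Q p := by
      simpa [map_sub] using ((ψ' x).hasFDerivWithinAt (s := Q) (x := p)).sub_const (ψ' x x)
    exact g.hasFDerivWithinAt.add (((hd.sub_const (ψ x)).sub hlin).const_mul c)
  have h := hmin.localize.hasFDerivWithinAt_nonneg hderiv
    (sub_mem_posTangentConeAt_of_segment_subset (hQ.segment_subset hp hu))
  simp only [add_apply, smul_apply,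
    sub_apply, smul_eq_mul, map_sub] at h
  simp only [bregman, map_sub]
  linarith

/-- One-step progress bound of mirror descent with step size `γ`. -/
theorem mirror_step_le {Q : Set E} {ψ : E → ℝ} {ψ' : E → E →L[ℝ] ℝ} {σ γ : ℝ} (hσ : 0 < σ)
    (hγ : 0 < γ) (hψd : ∀ x ∈ Q, HasFDerivWithinAt ψ (ψ' x) Q x) (hψ : StrongConvexOn Q σ ψ)
    {g : E →L[ℝ] ℝ} {x p u : E} (hx : x ∈ Q) (hp : p ∈ Q) (hu : u ∈ Q)
    (hmin : IsMinOn (fun z => g z + (1 / γ) * bregman ψ ψ' z x) Q p) :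
    g (x - u) ≤ (bregman ψ ψ' u x - bregman ψ ψ' u p) / γ + γ * ‖g‖ ^ 2 / (2 * σ) := by
  have hprox := hmin.bregman_prox_le hψ.1 hp hu (hψd p hp)
  have hV := hψ.le_bregman hp hx (hψd x hx)
  have hnorm : g (x - p) ≤ ‖g‖ * ‖p - x‖ := by
    rw [norm_sub_rev]
    exact (le_abs_self _).trans (g.le_opNorm _)
  have hyoung : ‖g‖ * ‖p - x‖ - σ / 2 * ‖p - x‖ ^ 2 / γ ≤ γ * ‖g‖ ^ 2 / (2 * σ) := by
    have heq : γ * ‖g‖ ^ 2 / (2 * σ) - (‖g‖ * ‖p - x‖ - σ / 2 * ‖p - x‖ ^ 2 / γ)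
        = (γ * ‖g‖ - σ * ‖p - x‖) ^ 2 / (2 * σ * γ) := by
      field_simp
      ring
    have : 0 ≤ (γ * ‖g‖ - σ * ‖p - x‖) ^ 2 / (2 * σ * γ) := by positivity
    linarith
  have hdiv : σ / 2 * ‖p - x‖ ^ 2 / γ ≤ bregman ψ ψ' p x / γ :=
    div_le_div_of_nonneg_right hV hγ.le
  have hsplit : g (x - u) = g (x - p) + g (p - u) := by simp only [map_sub]; ring
  rw [one_div_mul_eq_div, sub_div] at hprox
  linarith

end Bregman

/-- Weighted telescoping with nondecreasing nonnegative weights and bounded terms. -/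
theorem sum_mul_sub_succ_le {τ V : ℕ → ℝ} {R : ℝ} {N : ℕ} (hN : 1 ≤ N) (hτ1 : 0 ≤ τ 1)
    (hτ : ∀ k, 1 ≤ k → k < N → τ k ≤ τ (k + 1)) (hV : ∀ k, 1 ≤ k → k ≤ N → V k ≤ R) :
    ∑ k ∈ Icc 1 N, τ k * (V k - V (k + 1)) ≤ τ N * (R - V (N + 1)) := by
  induction N, hN using Nat.le_induction with
  | base =>
    simpa using mul_le_mul_of_nonneg_left (sub_le_sub_right (hV 1 le_rfl le_rfl) (V 2)) hτ1
  | succ n hn ih =>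
    rw [sum_Icc_succ_top (by omega)]
    have h := ih (fun k h1 h2 => hτ k h1 (by omega)) (fun k h1 h2 => hV k h1 (by omega))
    have hmul := mul_le_mul_of_nonneg_right (hτ n hn (by omega))
      (sub_nonneg.2 (hV (n + 1) (by omega) le_rfl))
    linarith

/-- A convex function at a weighted average, compared with a lower value `v`. -/
theorem ConvexOn.map_weighted_average_sub_le {E ι : Type*} [AddCommGroup E] [Module ℝ E]
    {Q : Set E} {f : E → ℝ} (hf : ConvexOn ℝ Q f) {s : Finset ι} {ω : ι → ℝ} {x : ι → E}
    (hω : ∀ i ∈ s, 0 ≤ ω i) (hs : 0 < ∑ i ∈ s, ω i) (hx : ∀ i ∈ s, x i ∈ Q) (v : ℝ) :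
    f ((∑ i ∈ s, ω i)⁻¹ • ∑ i ∈ s, ω i • x i) - v
      ≤ (∑ i ∈ s, ω i * (f (x i) - v)) / ∑ i ∈ s, ω i := by
  have h := hf.map_centerMass_le hω hs hx
  simp only [Finset.centerMass, Function.comp_apply, smul_eq_mul] at h
  have heq : (∑ i ∈ s, ω i * (f (x i) - v)) / ∑ i ∈ s, ω i
      = (∑ i ∈ s, ω i)⁻¹ * ∑ i ∈ s, ω i * f (x i) - v := by
    simp only [mul_sub, sum_sub_distrib, ← sum_mul]
    field_simp
  rw [heq]
  linarith

/-- Weighted ergodic bound for mirror descent: the weights `ω` and steps `γ` only enter through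
the monotonicity of `ω / γ` and the comparisons with `A` and `B`. -/
theorem mirror_descent_ergodic_le {E : Type*} [NormedAddCommGroup E] [NormedSpace ℝ E]
    {Q : Set E} {ψ : E → ℝ} {ψ' : E → E →L[ℝ] ℝ} {σ : ℝ} (hσ : 0 < σ)
    (hψd : ∀ x ∈ Q, HasFDerivWithinAt ψ (ψ' x) Q x) (hψ : StrongConvexOn Q σ ψ)
    {f : E → ℝ} (hf : ConvexOn ℝ Q f) {u : E} (hu : u ∈ Q)
    {R : ℝ} (hR : 0 < R) (hbound : ∀ x ∈ Q, bregman ψ ψ' u x ≤ R)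
    {m : ℝ} {N : ℕ} (hN : 1 ≤ N) {x : ℕ → E} {g : ℕ → E →L[ℝ] ℝ} {γ ω : ℕ → ℝ} {A B : ℝ}
    (hA : 0 < A) (hB : 0 < B) (hx1 : x 1 ∈ Q)
    (hsub : ∀ k, 1 ≤ k → k ≤ N → IsSubgradientAt f Q (g k) (x k))
    (hstep : ∀ k, 1 ≤ k → k ≤ N → x (k + 1) ∈ Q ∧
      IsMinOn (fun z => g k z + (1 / γ k) * bregman ψ ψ' z (x k)) Q (x (k + 1)))
    (hγ : ∀ k, 1 ≤ k → k ≤ N → 0 < γ k)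
    (hγg : ∀ k, 1 ≤ k → k ≤ N → (γ k * ‖g k‖) ^ 2 ≤ 2 * σ * R / k)
    (hmono : ∀ k, 1 ≤ k → k < N → ω k / γ k ≤ ω (k + 1) / γ (k + 1))
    (hAω : ∀ k, 1 ≤ k → k ≤ N → A * (k : ℝ) ^ (m / 2) ≤ ω k)
    (hBω : ∀ k, 1 ≤ k → k ≤ N → ω k / γ k ≤ B * (k : ℝ) ^ ((m + 1) / 2)) :
    f ((∑ k ∈ Icc 1 N, ω k)⁻¹ • ∑ k ∈ Icc 1 N, ω k • x k) - f u ≤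
      R * (B / A) * (((N : ℝ) ^ ((m + 1) / 2) + ∑ k ∈ Icc 1 N, (k : ℝ) ^ ((m - 1) / 2))
        / ∑ k ∈ Icc 1 N, (k : ℝ) ^ (m / 2)) := by
  have hxQ : ∀ k, 1 ≤ k → k ≤ N + 1 → x k ∈ Q := by
    intro k hk hkN
    obtain rfl | hk' := hk.eq_or_lt
    · exact hx1
    · obtain ⟨j, rfl⟩ : ∃ j, k = j + 1 := ⟨k - 1, by omega⟩
      exact (hstep j (by omega) (by omega)).1
  have hkpos : ∀ k : ℕ, 1 ≤ k → (0 : ℝ) < k := fun k hk => by exact_mod_cast hk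
  have hωpos : ∀ k, 1 ≤ k → k ≤ N → 0 < ω k := fun k h1 h2 =>
    (mul_pos hA (Real.rpow_pos_of_pos (hkpos k h1) _)).trans_le (hAω k h1 h2)
  have hne : (Icc 1 N).Nonempty := nonempty_Icc.2 hN
  have hpowpos : 0 < ∑ k ∈ Icc 1 N, (k : ℝ) ^ (m / 2) :=
    sum_pos (fun k hk => Real.rpow_pos_of_pos (hkpos k (mem_Icc.1 hk).1) _) hne
  have hden : A * ∑ k ∈ Icc 1 N, (k : ℝ) ^ (m / 2) ≤ ∑ k ∈ Icc 1 N, ω k := by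
    rw [mul_sum]
    exact sum_le_sum fun k hk => hAω k (mem_Icc.1 hk).1 (mem_Icc.1 hk).2
  have hsumpos : 0 < ∑ k ∈ Icc 1 N, ω k := (mul_pos hA hpowpos).trans_le hden
  have hterm : ∀ k ∈ Icc 1 N, ω k * (f (x k) - f u) ≤
      ω k / γ k * (bregman ψ ψ' u (x k) - bregman ψ ψ' u (x (k + 1)))
        + R * B * (k : ℝ) ^ ((m - 1) / 2) := by
    intro k hk
    obtain ⟨h1, h2⟩ := mem_Icc.1 hk
    have hk0 := hkpos k h1
    have hγk := hγ k h1 h2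
    have hωk := hωpos k h1 h2
    have hs := hsub k h1 h2 u hu
    have hm := mirror_step_le hσ hγk hψd hψ (hxQ k h1 (by omega)) (hstep k h1 h2).1 hu
      (hstep k h1 h2).2
    have hflip : g k (u - x k) = - g k (x k - u) := by simp only [map_sub]; ring
    have hgap : f (x k) - f u ≤ (bregman ψ ψ' u (x k) - bregman ψ ψ' u (x (k + 1))) / γ k
        + γ k * ‖g k‖ ^ 2 / (2 * σ) := by linarith
    have hquad : ω k / γ k * ((γ k * ‖g k‖) ^ 2 / (2 * σ)) ≤
        R * B * (k : ℝ) ^ ((m - 1) / 2) := by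
      have hpow : (k : ℝ) ^ ((m + 1) / 2) = (k : ℝ) ^ ((m - 1) / 2) * k := by
        rw [← Real.rpow_add_one hk0.ne']
        congr 1
        ring
      calc ω k / γ k * ((γ k * ‖g k‖) ^ 2 / (2 * σ))
          ≤ B * (k : ℝ) ^ ((m + 1) / 2) * (2 * σ * R / k / (2 * σ)) := by
            gcongr
            · exact hBω k h1 h2
            · exact hγg k h1 h2
        _ = R * B * (k : ℝ) ^ ((m - 1) / 2) := by
            rw [hpow]
            field_simp
    calc ω k * (f (x k) - f u)
        ≤ ω k * ((bregman ψ ψ' u (x k) - bregman ψ ψ' u (x (k + 1))) / γ k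
          + γ k * ‖g k‖ ^ 2 / (2 * σ)) := by gcongr
      _ = ω k / γ k * (bregman ψ ψ' u (x k) - bregman ψ ψ' u (x (k + 1)))
          + ω k / γ k * ((γ k * ‖g k‖) ^ 2 / (2 * σ)) := by field_simp
      _ ≤ _ := by gcongr
  have htel : ∑ k ∈ Icc 1 N, ω k / γ k * (bregman ψ ψ' u (x k) - bregman ψ ψ' u (x (k + 1)))
      ≤ R * B * (N : ℝ) ^ ((m + 1) / 2) := by
    have h := sum_mul_sub_succ_le (τ := fun k => ω k / γ k) (V := fun k => bregman ψ ψ' u (x k))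
      hN (div_pos (hωpos 1 le_rfl hN) (hγ 1 le_rfl hN)).le hmono
      (fun k h1 h2 => hbound _ (hxQ k h1 (by omega)))
    have hxN := hxQ (N + 1) (by omega) le_rfl
    have hV := bregman_nonneg hσ.le hψ hu hxN (hψd _ hxN)
    have hτN := (div_pos (hωpos N hN le_rfl) (hγ N hN le_rfl)).le
    calc _ ≤ ω N / γ N * (R - bregman ψ ψ' u (x (N + 1))) := h
      _ ≤ ω N / γ N * R := mul_le_mul_of_nonneg_left (by linarith) hτN
      _ ≤ B * (N : ℝ) ^ ((m + 1) / 2) * R := mul_le_mul_of_nonneg_right (hBω N hN le_rfl) hR.le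
      _ = _ := by ring
  have hnum : ∑ k ∈ Icc 1 N, ω k * (f (x k) - f u) ≤
      R * B * ((N : ℝ) ^ ((m + 1) / 2) + ∑ k ∈ Icc 1 N, (k : ℝ) ^ ((m - 1) / 2)) := by
    have h := sum_le_sum hterm
    rw [sum_add_distrib, ← mul_sum] at h
    linarith
  have hJ := hf.map_weighted_average_sub_le (s := Icc 1 N) (ω := ω) (x := x)
    (fun k hk => (hωpos k (mem_Icc.1 hk).1 (mem_Icc.1 hk).2).le) hsumpos
    (fun k hk => hxQ k (mem_Icc.1 hk).1 (by have := (mem_Icc.1 hk).2; omega)) (f u)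
  calc _ ≤ _ := hJ
    _ ≤ R * B * ((N : ℝ) ^ ((m + 1) / 2) + ∑ k ∈ Icc 1 N, (k : ℝ) ^ ((m - 1) / 2))
        / (A * ∑ k ∈ Icc 1 N, (k : ℝ) ^ (m / 2)) := by
      refine div_le_div₀ ?_ hnum (mul_pos hA hpowpos) hden
      positivity
    _ = _ := by field_simp

/-- **Theorem 1 (Lipschitz-free mirror descent, weak ergodic convergence).**
With adaptive step sizes `γ_k = √(2σR)/(G_k k^{a/2})`, `G_k = max_{j≤k} ‖∇f(x^j)‖_* j^{(1−a)/2}`,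
weights `ω_k = γ_k^{−m}` (if `−1 ≤ m ≤ 0`) or `k^{m/2}` (if `m > 0`), and
`x̂ = (∑ ω_k x^k)/(∑ ω_k)`:
`f(x̂) − f(x*) ≤ √(R/(2σ)) · (N^{(m+1)/2} + ∑ k^{(m−1)/2})/(∑ k^{m/2}) · max_k ‖∇f(x^k)‖_*`. -/
theorem lipschitz_free_mirror_descent_weak_ergodic
    {E : Type*} [NormedAddCommGroup E] [NormedSpace ℝ E] [FiniteDimensional ℝ E]
    (Q : Set E) (hQcomp : IsCompact Q) (hQconv : Convex ℝ Q)
    (ψ : E → ℝ) (ψ' : E → E →L[ℝ] ℝ) (σ : ℝ) (hσ : 0 < σ)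
    (hψdiff : ∀ x ∈ Q, HasFDerivWithinAt ψ (ψ' x) Q x)
    (hψstrong : StrongConvexOn Q σ ψ)
    (f : E → ℝ) (hfconv : ConvexOn ℝ Q f) (hfcont : ContinuousOn f Q)
    (xstar : E) (hxstarQ : xstar ∈ Q) (hxstar : IsMinOn f Q xstar)
    (R : ℝ) (hR : 0 < R) (hbound : ∀ x ∈ Q, bregman ψ ψ' xstar x ≤ R)
    (a m : ℝ) (ha0 : 0 ≤ a) (ha1 : a ≤ 1) (hm : -1 ≤ m)
    (N : ℕ) (hN : 1 ≤ N)
    (x : ℕ → E) (gf : ℕ → E →L[ℝ] ℝ) (G γ ω : ℕ → ℝ)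
    (hx1 : x 1 ∈ Q)
    (hsub : ∀ k, 1 ≤ k → k ≤ N → IsSubgradientAt f Q (gf k) (x k))
    (hgf : ∀ k, 1 ≤ k → k ≤ N → gf k ≠ 0)
    (hG : ∀ k (hk : 1 ≤ k), k ≤ N →
      G k = (Finset.Icc 1 k).sup' (Finset.nonempty_Icc.mpr hk)
        (fun j => ‖gf j‖ * (j : ℝ) ^ ((1 - a) / 2)))
    (hγ : ∀ k, 1 ≤ k → k ≤ N →
      γ k = Real.sqrt (2 * σ * R) / (G k * (k : ℝ) ^ (a / 2)))
    (hstep : ∀ k, 1 ≤ k → k ≤ N → x (k + 1) ∈ Q ∧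
      IsMinOn (fun z => gf k z + (1 / γ k) * bregman ψ ψ' z (x k)) Q (x (k + 1)))
    (hω : ∀ k, ω k = if m ≤ 0 then γ k ^ (-m) else (k : ℝ) ^ (m / 2)) :
    f ((∑ k ∈ Finset.Icc 1 N, ω k)⁻¹ • ∑ k ∈ Finset.Icc 1 N, ω k • x k) - f xstar ≤
      Real.sqrt (R / (2 * σ))
        * (((N : ℝ) ^ ((m + 1) / 2) + ∑ k ∈ Finset.Icc 1 N, (k : ℝ) ^ ((m - 1) / 2))
            / (∑ k ∈ Finset.Icc 1 N, (k : ℝ) ^ (m / 2)))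
        * (Finset.Icc 1 N).sup' (Finset.nonempty_Icc.mpr hN) (fun k => ‖gf k‖) := by
  set M := (Icc 1 N).sup' (nonempty_Icc.mpr hN) (fun k => ‖gf k‖)
  set c := Real.sqrt (2 * σ * R)
  have hcpos : 0 < c := Real.sqrt_pos.2 (by positivity)
  have hcsq : c ^ 2 = 2 * σ * R := Real.sq_sqrt (by positivity)
  have hgM : ∀ k, 1 ≤ k → k ≤ N → ‖gf k‖ ≤ M := fun k h1 h2 =>
    le_sup' (fun k => ‖gf k‖) (mem_Icc.2 ⟨h1, h2⟩)
  have hgpos : ∀ k, 1 ≤ k → k ≤ N → 0 < ‖gf k‖ := fun k h1 h2 => norm_pos_iff.2 (hgf k h1 h2)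
  have hMpos : 0 < M := (hgpos 1 le_rfl hN).trans_le (hgM 1 le_rfl hN)
  have hkpos : ∀ k : ℕ, 1 ≤ k → (0 : ℝ) < k := fun k hk => by exact_mod_cast hk
  have hGlow : ∀ k, 1 ≤ k → k ≤ N → ‖gf k‖ * (k : ℝ) ^ ((1 - a) / 2) ≤ G k := by
    intro k h1 h2
    rw [hG k h1 h2]
    exact le_sup' (fun j : ℕ => ‖gf j‖ * (j : ℝ) ^ ((1 - a) / 2)) (mem_Icc.2 ⟨h1, le_rfl⟩)
  have hGup : ∀ k, 1 ≤ k → k ≤ N → G k ≤ M * (k : ℝ) ^ ((1 - a) / 2) := by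
    intro k h1 h2
    rw [hG k h1 h2]
    refine sup'_le _ _ fun j hj => ?_
    obtain ⟨hj1, hj2⟩ := mem_Icc.1 hj
    have := hgM j hj1 (hj2.trans h2)
    gcongr
  have hGpos : ∀ k, 1 ≤ k → k ≤ N → 0 < G k := fun k h1 h2 =>
    (mul_pos (hgpos k h1 h2) (Real.rpow_pos_of_pos (hkpos k h1) _)).trans_le (hGlow k h1 h2)
  have hGmono : ∀ k, 1 ≤ k → k < N → G k ≤ G (k + 1) := by
    intro k h1 h2
    rw [hG k h1 h2.le, hG (k + 1) (by omega) h2]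
    exact sup'_mono _ (Icc_subset_Icc le_rfl (by omega)) _
  have hγpos : ∀ k, 1 ≤ k → k ≤ N → 0 < γ k := by
    intro k h1 h2
    rw [hγ k h1 h2]
    exact div_pos hcpos (mul_pos (hGpos k h1 h2) (Real.rpow_pos_of_pos (hkpos k h1) _))
  have hγanti : ∀ k, 1 ≤ k → k < N → γ (k + 1) ≤ γ k := by
    intro k h1 h2
    have hk0 := hkpos k h1
    have hGk := hGpos k h1 h2.le
    have hG' := hGmono k h1 h2
    rw [hγ k h1 h2.le, hγ (k + 1) (by omega) h2]
    gcongr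
    · exact hGk.le.trans hG'
    · omega
  have hsplit : ∀ k : ℕ, 1 ≤ k →
      (k : ℝ) ^ ((1 - a) / 2) * (k : ℝ) ^ (a / 2) = (k : ℝ) ^ (1 / 2 : ℝ) := by
    intro k h1
    rw [← Real.rpow_add (hkpos k h1)]
    congr 1
    ring
  have hγg : ∀ k, 1 ≤ k → k ≤ N → (γ k * ‖gf k‖) ^ 2 ≤ 2 * σ * R / k := by
    intro k h1 h2
    have hk0 := hkpos k h1
    have hg0 := hgpos k h1 h2
    have hle : γ k * ‖gf k‖ ≤ c / (k : ℝ) ^ (1 / 2 : ℝ) := by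
      calc γ k * ‖gf k‖
          ≤ c / (‖gf k‖ * (k : ℝ) ^ ((1 - a) / 2) * (k : ℝ) ^ (a / 2)) * ‖gf k‖ := by
            rw [hγ k h1 h2]
            have := hGlow k h1 h2
            gcongr
        _ = c / (k : ℝ) ^ (1 / 2 : ℝ) := by
            rw [mul_assoc, hsplit k h1]
            field_simp
    calc (γ k * ‖gf k‖) ^ 2 ≤ (c / (k : ℝ) ^ (1 / 2 : ℝ)) ^ 2 := by
          have := hγpos k h1 h2
          gcongr
      _ = 2 * σ * R / k := by
          rw [div_pow, hcsq, ← Real.sqrt_eq_rpow, Real.sq_sqrt hk0.le]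
  have hγinv : ∀ k, 1 ≤ k → k ≤ N → (γ k)⁻¹ ≤ M / c * (k : ℝ) ^ (1 / 2 : ℝ) := by
    intro k h1 h2
    have hk0 := hkpos k h1
    calc (γ k)⁻¹ = G k * (k : ℝ) ^ (a / 2) / c := by rw [hγ k h1 h2, inv_div]
      _ ≤ M * (k : ℝ) ^ ((1 - a) / 2) * (k : ℝ) ^ (a / 2) / c := by
          have := hGup k h1 h2
          gcongr
      _ = M / c * (k : ℝ) ^ (1 / 2 : ℝ) := by
          rw [mul_assoc, hsplit k h1]
          ring
  have hconst : Real.sqrt (R / (2 * σ)) = R / c := by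
    rw [Real.sqrt_eq_iff_mul_self_eq (by positivity) (by positivity)]
    field_simp
    linarith
  have hrpow : ∀ k : ℕ, ∀ s : ℝ, ((k : ℝ) ^ (1 / 2 : ℝ)) ^ s = (k : ℝ) ^ (s / 2) := by
    intro k s
    rw [← Real.rpow_mul (Nat.cast_nonneg k)]
    congr 1
    ring
  suffices h : ∃ A B : ℝ, 0 < A ∧ 0 < B ∧ B / A = M / c ∧
      (∀ k, 1 ≤ k → k < N → ω k / γ k ≤ ω (k + 1) / γ (k + 1)) ∧
      (∀ k, 1 ≤ k → k ≤ N → A * (k : ℝ) ^ (m / 2) ≤ ω k) ∧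
      (∀ k, 1 ≤ k → k ≤ N → ω k / γ k ≤ B * (k : ℝ) ^ ((m + 1) / 2)) by
    obtain ⟨A, B, hA, hB, hAB, hmono, hAω, hBω⟩ := h
    have h := mirror_descent_ergodic_le hσ hψdiff hψstrong hfconv hxstarQ hR hbound hN hA hB hx1
      hsub hstep hγpos hγg hmono hAω hBω
    rw [hAB] at h
    rw [hconst]
    refine h.trans_eq ?_
    ring
  have hMc : 0 < M / c := div_pos hMpos hcpos
  by_cases hm0 : m ≤ 0
  · have hωγ : ∀ k, 1 ≤ k → k ≤ N → ω k / γ k = ((γ k)⁻¹) ^ (m + 1) := by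
      intro k h1 h2
      have hγk := hγpos k h1 h2
      rw [hω k, if_pos hm0, Real.inv_rpow hγk.le, ← Real.rpow_neg hγk.le,
        ← Real.rpow_sub_one hγk.ne']
      congr 1
      ring
    refine ⟨(M / c) ^ m, (M / c) ^ (m + 1), Real.rpow_pos_of_pos hMc _,
      Real.rpow_pos_of_pos hMc _, ?_, fun k h1 h2 => ?_, fun k h1 h2 => ?_, fun k h1 h2 => ?_⟩
    · rw [← Real.rpow_sub hMc, add_sub_cancel_left, Real.rpow_one]
    · rw [hωγ k h1 h2.le, hωγ (k + 1) (by omega) h2]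
      have h0 := hγpos (k + 1) (by omega) h2
      exact Real.rpow_le_rpow (inv_nonneg.2 (hγpos k h1 h2.le).le)
        (inv_anti₀ h0 (hγanti k h1 h2)) (by linarith)
    · have hγk := hγpos k h1 h2
      rw [hω k, if_pos hm0, Real.rpow_neg hγk.le, ← Real.inv_rpow hγk.le, ← hrpow,
        ← Real.mul_rpow hMc.le (Real.rpow_nonneg (Nat.cast_nonneg k) _)]
      exact Real.rpow_le_rpow_of_nonpos (inv_pos.2 hγk) (hγinv k h1 h2) hm0
    · rw [hωγ k h1 h2, ← hrpow,
        ← Real.mul_rpow hMc.le (Real.rpow_nonneg (Nat.cast_nonneg k) _)]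
      exact Real.rpow_le_rpow (inv_nonneg.2 (hγpos k h1 h2).le) (hγinv k h1 h2) (by linarith)
  · have hωk : ∀ k, ω k = (k : ℝ) ^ (m / 2) := fun k => by rw [hω k, if_neg hm0]
    push Not at hm0
    refine ⟨1, M / c, one_pos, hMc, div_one _, fun k h1 h2 => ?_, fun k h1 h2 => ?_,
      fun k h1 h2 => ?_⟩
    · have h0 := hγpos (k + 1) (by omega) h2
      have h3 := hγanti k h1 h2
      rw [hωk, hωk]
      gcongr
      omega
    · rw [hωk, one_mul]
    · have hpow : (k : ℝ) ^ ((m + 1) / 2) = (k : ℝ) ^ (m / 2) * (k : ℝ) ^ (1 / 2 : ℝ) := by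
        rw [← Real.rpow_add (hkpos k h1)]
        congr 1
        ring
      rw [hωk, hpow, div_eq_mul_inv, mul_left_comm]
      exact mul_le_mul_of_nonneg_left (hγinv k h1 h2) (Real.rpow_nonneg (Nat.cast_nonneg k) _)
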